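/- Let m ≥ 3 and n ≥ 3. The randomized Copeland rule is the unique SDS that is strategyproof, anonymous, neutral, and 2/m-Condorcet-consistent. -/

import Mathlib

open Finset

noncomputable section

/-- A preference profile: each voter's strict linear order on the `m`
alternatives is encoded as a ranking permutation, where `R i x` is the rank of
alternative `x` for voter `i` (rank `0` = most preferred). Voter `i` strictly
prefers `x` to `y` iff `R i x < R i y`. -/
abbrev Profile (n m : ℕ) := Fin n → Equiv.Perm (Fin m)

/-- `F R x` is the probability that the social decision scheme `F` assigns to
alternative `x` at profile `R`; `IsSDS F` says every `F R` is a lottery. -/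
def IsSDS {n m : ℕ} (F : Profile n m → Fin m → ℝ) : Prop :=
  (∀ R x, 0 ≤ F R x) ∧ ∀ R, ∑ x, F R x = 1

/-- Stochastic-dominance preference of voter `i` (with preferences as in `R`):
lottery `p` is weakly preferred to lottery `q`. -/
def SDPref {n m : ℕ} (R : Profile n m) (i : Fin n) (p q : Fin m → ℝ) : Prop :=
  ∀ x : Fin m,
    ∑ y ∈ univ.filter (fun y => R i y < R i x), q y ≤
      ∑ y ∈ univ.filter (fun y => R i y < R i x), p y

/-- Strategyproofness: the truthful outcome is SD-preferred to any outcome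
obtainable by a unilateral deviation. -/
def Strategyproof {n m : ℕ} (F : Profile n m → Fin m → ℝ) : Prop :=
  ∀ (R R' : Profile n m) (i : Fin n),
    (∀ j, j ≠ i → R j = R' j) → SDPref R i (F R) (F R')

/-- Anonymity: permuting the voters does not change the outcome. -/
def Anonymous {n m : ℕ} (F : Profile n m → Fin m → ℝ) : Prop :=
  ∀ (π : Equiv.Perm (Fin n)) (R : Profile n m), F (fun i => R (π i)) = F R

/-- The profile obtained from `R` by relabeling the alternatives by `τ`
(in `relabel τ R`, alternative `τ x` gets the rank that `x` has in `R`). -/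
def relabel {n m : ℕ} (τ : Equiv.Perm (Fin m)) (R : Profile n m) : Profile n m :=
  fun i => τ.symm.trans (R i)

/-- Neutrality: relabeling the alternatives permutes the outcome accordingly. -/
def Neutral {n m : ℕ} (F : Profile n m → Fin m → ℝ) : Prop :=
  ∀ (τ : Equiv.Perm (Fin m)) (R : Profile n m) (x : Fin m),
    F (relabel τ R) (τ x) = F R x

/-- The supporting size `n_{xy}(R)`: the number of voters preferring `x` to `y`. -/
def suppSize {n m : ℕ} (R : Profile n m) (x y : Fin m) : ℕ :=
  (univ.filter (fun i => R i x < R i y)).card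

/-- `x` is the Condorcet winner of `R`. -/
def CondorcetWinner {n m : ℕ} (R : Profile n m) (x : Fin m) : Prop :=
  ∀ y, y ≠ x → suppSize R y x < suppSize R x y

/-- `α`-Condorcet-consistency. -/
def CondorcetConsistent {n m : ℕ} (F : Profile n m → Fin m → ℝ) (α : ℝ) : Prop :=
  ∀ R x, CondorcetWinner R x → α ≤ F R x

/-- `x` is Pareto-dominated in `R`. -/
def ParetoDominated {n m : ℕ} (R : Profile n m) (x : Fin m) : Prop :=
  ∃ y, ∀ i, R i y < R i x

/-- `β`-ex post efficiency. -/
def ExPostEff {n m : ℕ} (F : Profile n m → Fin m → ℝ) (β : ℝ) : Prop :=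
  ∀ R x, ParetoDominated R x → F R x ≤ β

/-- The probability that the dictatorial SDS of voter `i` assigns to `x`:
`1` if `x` is voter `i`'s most preferred alternative and `0` otherwise. -/
def dictProb {n m : ℕ} (R : Profile n m) (i : Fin n) (x : Fin m) : ℝ :=
  if ∀ y, R i x ≤ R i y then 1 else 0

/-- `d` is a random dictatorship. -/
def IsRandDict {n m : ℕ} (d : Profile n m → Fin m → ℝ) : Prop :=
  ∃ δ : Fin n → ℝ, (∀ i, 0 ≤ δ i) ∧ ∑ i, δ i = 1 ∧
    ∀ R x, d R x = ∑ i, δ i * dictProb R i x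

/-- `F` can be written as `γ d + (1 - γ) g` with `d` a random dictatorship and
`g` a strategyproof SDS. -/
def DecomposesAt {n m : ℕ} (F : Profile n m → Fin m → ℝ) (γ : ℝ) : Prop :=
  ∃ d g : Profile n m → Fin m → ℝ, IsRandDict d ∧ IsSDS g ∧ Strategyproof g ∧
    ∀ R x, F R x = γ * d R x + (1 - γ) * g R x

/-- `F` is `γ`-randomly dictatorial: `γ ∈ [0,1]` is the maximal value admitting
a decomposition `F = γ d + (1 - γ) g` as above. -/
def RandDictDegree {n m : ℕ} (F : Profile n m → Fin m → ℝ) (γ : ℝ) : Prop :=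
  0 ≤ γ ∧ γ ≤ 1 ∧ DecomposesAt F γ ∧
    ∀ γ', 0 ≤ γ' → γ' ≤ 1 → DecomposesAt F γ' → γ' ≤ γ

/-- The profile `R^{i:yx}` obtained from `R` by swapping `x` and `y` in voter
`i`'s preference relation (used when `x` is ranked directly above `y`). -/
def swapTop {n m : ℕ} (R : Profile n m) (i : Fin n) (x y : Fin m) : Profile n m :=
  Function.update R i ((R i).trans (Equiv.swap (R i x) (R i y)))

/-- The weight vector `b` defining the randomized Copeland rule:
`b k = 2/(m(m-1))` for `k > n/2`, `b k = 1/(m(m-1))` for `k = n/2`, `b k = 0`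
for `k < n/2`. -/
def copelandWeight (n m : ℕ) (k : ℕ) : ℝ :=
  if n < 2 * k then 2 / ((m : ℝ) * ((m : ℝ) - 1))
  else if 2 * k = n then 1 / ((m : ℝ) * ((m : ℝ) - 1))
  else 0

/-- The randomized Copeland rule `f_C(R, x) = ∑_{y ≠ x} b_{n_{xy}(R)}`. -/
def randCopeland (n m : ℕ) : Profile n m → Fin m → ℝ :=
  fun R x => ∑ y ∈ univ.filter (fun y => y ≠ x), copelandWeight n m (suppSize R x y)

/-- A point voting SDS, given by a scoring vector `a` (indexed by ranks
`0, …, m-1`, i.e. `a k` is the score of the `(k+1)`-st ranked alternative). -/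
structure PointVoting (n m : ℕ) where
  a : ℕ → ℝ
  mono : ∀ k l : ℕ, k ≤ l → l < m → a l ≤ a k
  nonneg : ∀ k : ℕ, k < m → 0 ≤ a k
  sum_eq : ∑ k ∈ Finset.range m, a k = 1 / (n : ℝ)

/-- The value of a point voting SDS. -/
def pvVal {n m : ℕ} (pv : PointVoting n m) : Profile n m → Fin m → ℝ :=
  fun R x => ∑ i, pv.a (R i x : ℕ)

/-- A supporting size SDS, given by a vector `b` indexed by supporting sizes
`0, …, n`. -/
structure SupportingSize (n m : ℕ) where
  b : ℕ → ℝ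
  mono : ∀ k l : ℕ, k ≤ l → l ≤ n → b k ≤ b l
  nonneg : ∀ k : ℕ, k ≤ n → 0 ≤ b k
  pair_eq : ∀ k : ℕ, k ≤ n → b k + b (n - k) = 2 / ((m : ℝ) * ((m : ℝ) - 1))

/-- The value of a supporting size SDS. -/
def ssVal {n m : ℕ} (S : SupportingSize n m) : Profile n m → Fin m → ℝ :=
  fun R x => ∑ y ∈ univ.filter (fun y => y ≠ x), S.b (suppSize R x y)

/-- A duple: a strategyproof SDS that puts positive probability on at most two
fixed alternatives. -/
def IsDuple {n m : ℕ} (g : Profile n m → Fin m → ℝ) : Prop :=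
  IsSDS g ∧ Strategyproof g ∧ ∃ x y : Fin m, ∀ R z, z ≠ x → z ≠ y → g R z = 0

/-- A unilateral: a strategyproof SDS that depends only on the preferences of a
single fixed voter. -/
def IsUnilateral {n m : ℕ} (g : Profile n m → Fin m → ℝ) : Prop :=
  IsSDS g ∧ Strategyproof g ∧
    ∃ i : Fin n, ∀ R R' : Profile n m, R i = R' i → g R = g R'

/-- `F` is a convex combination of SDSs satisfying the property `P`. -/
def MixOf {n m : ℕ} (P : (Profile n m → Fin m → ℝ) → Prop)
    (F : Profile n m → Fin m → ℝ) : Prop :=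
  ∃ (K : ℕ) (w : Fin K → ℝ) (g : Fin K → Profile n m → Fin m → ℝ),
    (∀ k, 0 ≤ w k) ∧ ∑ k, w k = 1 ∧ (∀ k, P (g k)) ∧
    ∀ R x, F R x = ∑ k, w k * g k R x

/-- The uniform random dictatorship. -/
def uniformRD (n m : ℕ) : Profile n m → Fin m → ℝ :=
  fun R x => (1 / (n : ℝ)) * ∑ i, dictProb R i x

/-- The uniform lottery. -/
def uniformLottery (n m : ℕ) : Profile n m → Fin m → ℝ :=
  fun _ _ => 1 / (m : ℝ)


/-! ### Part 1: the randomized Copeland rule has the properties -/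

lemma suppSize_add {n m : ℕ} (R : Profile n m) {x y : Fin m} (h : x ≠ y) :
    suppSize R x y + suppSize R y x = n := by
  unfold suppSize
  have : (univ.filter (fun i => R i y < R i x)) = univ.filter (fun i => ¬ (R i x < R i y)) := by
    ext i
    have : R i x ≠ R i y := fun e => h ((R i).injective e)
    simp only [mem_filter, mem_univ, true_and]
    grind
  rw [this, Finset.card_filter_add_card_filter_not]
  simp

lemma sym_sum {m : ℕ} (D : Finset (Fin m)) (w : Fin m → Fin m → ℝ) (c : ℝ)
    (h : ∀ x y, x ≠ y → w x y + w y x = c) :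
    2 * ∑ x ∈ D, ∑ y ∈ D.filter (fun y => y ≠ x), w x y = (D.card : ℝ) * ((D.card : ℝ) - 1) * c := by
  have e1 : ∑ x ∈ D, ∑ y ∈ D.filter (fun y => y ≠ x), w x y
      = ∑ x ∈ D, ∑ y ∈ D.filter (fun y => y ≠ x), w y x := by
    simp only [Finset.sum_filter]
    rw [Finset.sum_comm]
    refine Finset.sum_congr rfl fun x _ => Finset.sum_congr rfl fun y _ => ?_
    by_cases e : x = y <;> simp [e, ne_comm]
  rw [two_mul]
  nth_rewrite 2 [e1]
  rw [← Finset.sum_add_distrib]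
  have : ∀ x ∈ D, (∑ y ∈ D.filter (fun y => y ≠ x), w x y + ∑ y ∈ D.filter (fun y => y ≠ x), w y x)
      = ((D.card : ℝ) - 1) * c := by
    intro x hx
    rw [← Finset.sum_add_distrib, Finset.sum_congr rfl (g := fun _ => c)]
    · rw [Finset.sum_const, Finset.filter_ne', Finset.card_erase_of_mem hx, nsmul_eq_mul,
        Nat.cast_sub (Finset.card_pos.mpr ⟨x, hx⟩)]
      simp
    · intro y hy
      exact h x y (Ne.symm (Finset.mem_filter.mp hy).2)
  rw [Finset.sum_congr rfl this, Finset.sum_const, nsmul_eq_mul]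
  ring

lemma cw_pair {n m : ℕ} {a b : ℕ} (h : a + b = n) :
    copelandWeight n m a + copelandWeight n m b = 2 / ((m : ℝ) * ((m : ℝ) - 1)) := by
  unfold copelandWeight
  rcases lt_trichotomy (2 * a) n with h1 | h1 | h1
  · rw [if_neg (by omega), if_neg (by omega), if_pos (by omega)]; ring
  · rw [if_neg (by omega), if_pos (by omega), if_neg (by omega), if_pos (by omega)]; ring
  · rw [if_pos (by omega), if_neg (by omega), if_neg (by omega)]; ring

lemma cw_nonneg {n m : ℕ} (hm : 3 ≤ m) (k : ℕ) : 0 ≤ copelandWeight n m k := by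
  have : (3 : ℝ) ≤ m := by exact_mod_cast hm
  have h1 : 0 ≤ (m : ℝ) * ((m : ℝ) - 1) := mul_nonneg (by linarith) (by linarith)
  unfold copelandWeight
  split_ifs <;> positivity

lemma cw_mono {n m : ℕ} (hm : 3 ≤ m) {k l : ℕ} (h : k ≤ l) :
    copelandWeight n m k ≤ copelandWeight n m l := by
  have : (3 : ℝ) ≤ m := by exact_mod_cast hm
  have h1 : 0 ≤ (m : ℝ) * ((m : ℝ) - 1) := mul_nonneg (by linarith) (by linarith)
  have h2 : 0 ≤ 1 / ((m : ℝ) * ((m : ℝ) - 1)) := by positivity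
  have h3 : 2 / ((m : ℝ) * ((m : ℝ) - 1)) = 2 * (1 / ((m : ℝ) * ((m : ℝ) - 1))) := by ring
  unfold copelandWeight
  rw [h3]
  split_ifs <;> first | omega | linarith

lemma rc_sds {n m : ℕ} (hm : 3 ≤ m) : IsSDS (randCopeland n m) := by
  have h3 : (3 : ℝ) ≤ m := by exact_mod_cast hm
  refine ⟨fun R x => Finset.sum_nonneg fun y _ => cw_nonneg hm _, fun R => ?_⟩
  have := sym_sum (univ : Finset (Fin m)) (fun x y => copelandWeight n m (suppSize R x y))
    (2 / ((m : ℝ) * ((m : ℝ) - 1))) (fun x y h => cw_pair (suppSize_add R h))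
  have h4 : (m : ℝ) - 1 ≠ 0 := by linarith
  have h5 : (m : ℝ) ≠ 0 := by linarith
  simp only [Finset.card_univ, Fintype.card_fin] at this
  have h6 : (m : ℝ) * ((m : ℝ) - 1) * (2 / ((m : ℝ) * ((m : ℝ) - 1))) = 2 := by field_simp
  rw [h6] at this
  unfold randCopeland
  linarith

lemma rc_sp {n m : ℕ} (hm : 3 ≤ m) : Strategyproof (randCopeland n m) := by
  intro R R' i h x
  set D := univ.filter (fun y => R i y < R i x) with hD
  have key : ∀ Q : Profile n m, ∑ y ∈ D, randCopeland n m Q y =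
      ∑ y ∈ D, ∑ z ∈ D.filter (fun z => z ≠ y), copelandWeight n m (suppSize Q y z)
      + ∑ y ∈ D, ∑ z ∈ Dᶜ, copelandWeight n m (suppSize Q y z) := by
    intro Q
    rw [← Finset.sum_add_distrib]
    refine Finset.sum_congr rfl fun y hy => ?_
    unfold randCopeland
    rw [← Finset.sum_union]
    · refine Finset.sum_congr ?_ fun _ _ => rfl
      ext z
      simp only [mem_filter, mem_univ, true_and, mem_union, mem_compl]
      by_cases hz : z ∈ D
      · simp [hz]
      · simp only [hz, false_and, not_false_eq_true, or_true, iff_true]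
        rintro rfl; exact hz hy
    · rw [Finset.disjoint_left]
      intro z hz
      simp [(Finset.mem_filter.mp hz).1]
  have s1 := sym_sum D (fun x y => copelandWeight n m (suppSize R x y))
    (2 / ((m : ℝ) * ((m : ℝ) - 1))) (fun x y h => cw_pair (suppSize_add R h))
  have s2 := sym_sum D (fun x y => copelandWeight n m (suppSize R' x y))
    (2 / ((m : ℝ) * ((m : ℝ) - 1))) (fun x y h => cw_pair (suppSize_add R' h))
  rw [key, key]
  have : ∑ y ∈ D, ∑ z ∈ Dᶜ, copelandWeight n m (suppSize R' y z) ≤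
      ∑ y ∈ D, ∑ z ∈ Dᶜ, copelandWeight n m (suppSize R y z) := by
    refine Finset.sum_le_sum fun y hy => Finset.sum_le_sum fun z hz => cw_mono hm ?_
    unfold suppSize
    refine Finset.card_le_card fun j hj => ?_
    simp only [mem_filter, mem_univ, true_and, hD, mem_compl, not_lt] at hy hz hj ⊢
    by_cases e : j = i
    · subst e; exact lt_of_lt_of_le hy hz
    · rw [h j e]; exact hj
  linarith

lemma rc_anon {n m : ℕ} : Anonymous (randCopeland n m) := by
  intro π R
  funext x
  unfold randCopeland
  refine Finset.sum_congr rfl fun y _ => ?_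
  congr 1
  unfold suppSize
  refine Finset.card_bij (fun i _ => π i) ?_ ?_ ?_
  · intro i hi; simpa using hi
  · intro a _ b _ h; exact π.injective h
  · intro b hb; exact ⟨π.symm b, by simpa using hb, by simp⟩

lemma rc_neut {n m : ℕ} : Neutral (randCopeland n m) := by
  intro τ R x
  unfold randCopeland
  symm
  refine Finset.sum_bij (fun y _ => τ y) ?_ ?_ ?_ ?_
  · intro i hi; simpa using hi
  · intro a _ b _ h; exact τ.injective h
  · intro b hb; exact ⟨τ.symm b, by
      simp only [mem_filter, mem_univ, true_and] at hb ⊢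
      rintro rfl; simp at hb, by simp⟩
  · intro y _
    simp [suppSize, relabel]

lemma rc_cc {n m : ℕ} (hm : 3 ≤ m) : CondorcetConsistent (randCopeland n m) (2 / (m : ℝ)) := by
  intro R x h
  have h3 : (3 : ℝ) ≤ m := by exact_mod_cast hm
  have h4 : (m : ℝ) - 1 ≠ 0 := by linarith
  have h5 : (m : ℝ) ≠ 0 := by linarith
  unfold randCopeland
  rw [Finset.sum_congr rfl (g := fun _ => 2 / ((m : ℝ) * ((m : ℝ) - 1)))]
  · rw [Finset.sum_const, Finset.filter_ne', Finset.card_erase_of_mem (mem_univ _), nsmul_eq_mul,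
      Nat.cast_sub (Finset.card_pos.mpr ⟨x, mem_univ _⟩)]
    simp only [card_univ, Fintype.card_fin, Nat.cast_one]
    apply le_of_eq
    field_simp
  · intro y hy
    have hy := (Finset.mem_filter.mp hy).2
    have a := h y hy
    have b := suppSize_add R hy
    unfold copelandWeight
    rw [if_pos (by omega)]

/-! ### Part 2: structure of strategyproof rules -/

def upS {m : ℕ} (σ : Equiv.Perm (Fin m)) (x : Fin m) : Finset (Fin m) :=
  univ.filter (fun y => σ y < σ x)

def mkP {m : ℕ} (f : Fin m → ℕ) : Equiv.Perm (Fin m) := (Tuple.sort f)⁻¹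

lemma mkP_lt {m : ℕ} (f : Fin m → ℕ) {a b : Fin m} (h : f a < f b) : mkP f a < mkP f b := by
  by_contra hc
  have := Tuple.monotone_sort f (not_lt.mp hc)
  simp [mkP] at this
  omega

lemma upS_mkP {m : ℕ} (f : Fin m → ℕ) (x : Fin m) (S : Finset (Fin m))
    (h1 : ∀ y ∈ S, f y < f x) (h2 : ∀ y, y ∉ S → y ≠ x → f x < f y) : upS (mkP f) x = S := by
  ext y
  simp only [upS, mem_filter, mem_univ, true_and]
  refine ⟨fun h => ?_, fun h => mkP_lt f (h1 y h)⟩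
  by_contra hy
  rcases eq_or_ne y x with rfl | e
  · exact lt_irrefl _ h
  · exact lt_asymm h (mkP_lt f (h2 y hy e))

lemma upS_card {m : ℕ} (σ : Equiv.Perm (Fin m)) (x : Fin m) : (upS σ x).card = (σ x : ℕ) := by
  have : (upS σ x).map σ.toEmbedding = Finset.Iio (σ x) := by
    ext y
    simp only [upS, mem_map, mem_filter, mem_univ, true_and, mem_Iio, Equiv.coe_toEmbedding]
    exact ⟨by rintro ⟨a, h, rfl⟩; exact h, fun h => ⟨σ.symm y, by simpa using h, by simp⟩⟩
  rw [← Finset.card_map σ.toEmbedding, this, Fin.card_Iio]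

lemma sp_set {n m : ℕ} {F : Profile n m → Fin m → ℝ} (hF : IsSDS F) (hS : Strategyproof F)
    {R R' : Profile n m} {i : Fin n} (h : ∀ j, j ≠ i → R j = R' j) (D : Finset (Fin m))
    (hD : ∀ a ∈ D, ∀ b, b ∉ D → R i a < R i b) : ∑ y ∈ D, F R' y ≤ ∑ y ∈ D, F R y := by
  by_cases hu : D = univ
  · subst hu; rw [hF.2, hF.2]
  · have : (Dᶜ).Nonempty := by
      rw [Finset.nonempty_iff_ne_empty]; simpa using hu
    obtain ⟨x, hx, hmin⟩ := Finset.exists_min_image Dᶜ (R i) this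
    have e : D = univ.filter (fun y => R i y < R i x) := by
      ext y
      simp only [mem_filter, mem_univ, true_and]
      refine ⟨fun hy => hD y hy x (by simpa using hx), fun hy => ?_⟩
      by_contra hc
      exact absurd hy (not_lt.mpr (hmin y (by simpa using hc)))
    rw [e]
    exact hS R R' i h x

lemma sp_eq {n m : ℕ} {F : Profile n m → Fin m → ℝ} (hF : IsSDS F) (hS : Strategyproof F)
    {R R' : Profile n m} {i : Fin n} (h : ∀ j, j ≠ i → R j = R' j) (D : Finset (Fin m))
    (hD : ∀ a ∈ D, ∀ b, b ∉ D → R i a < R i b) (hD' : ∀ a ∈ D, ∀ b, b ∉ D → R' i a < R' i b) :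
    ∑ y ∈ D, F R y = ∑ y ∈ D, F R' y :=
  le_antisymm (sp_set hF hS (fun j e => (h j e).symm) D hD') (sp_set hF hS h D hD)

lemma not_mem_upS {m : ℕ} (σ : Equiv.Perm (Fin m)) (x : Fin m) : x ∉ upS σ x := by simp [upS]

lemma init_up {m : ℕ} {σ : Equiv.Perm (Fin m)} {x : Fin m} {W : Finset (Fin m)} (h : upS σ x = W) :
    ∀ a ∈ W, ∀ b, b ∉ W → σ a < σ b := by
  subst h
  intro a ha b hb
  simp [upS] at ha hb
  exact lt_of_lt_of_le ha hb

lemma init_ins {m : ℕ} {σ : Equiv.Perm (Fin m)} {x : Fin m} {W : Finset (Fin m)}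
    (h : upS σ x = W) : ∀ a ∈ insert x W, ∀ b, b ∉ insert x W → σ a < σ b := by
  subst h
  intro a ha b hb
  simp only [upS, mem_insert, mem_filter, mem_univ, true_and, not_or, not_lt] at ha hb
  have : σ x ≠ σ b := fun e => hb.1 (σ.injective e).symm
  have hb' : σ x < σ b := lt_of_le_of_ne hb.2 this
  rcases ha with rfl | ha
  · exact hb'
  · exact ha.trans hb'

lemma F_up_one {n m : ℕ} {F : Profile n m → Fin m → ℝ} (hF : IsSDS F) (hS : Strategyproof F)
    {R R' : Profile n m} {i : Fin n} (h : ∀ j, j ≠ i → R j = R' j) (x : Fin m)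
    (e : upS (R i) x = upS (R' i) x) : F R x = F R' x := by
  have a := sp_eq hF hS h (upS (R i) x) (init_up rfl) (init_up e.symm)
  have b := sp_eq hF hS h (insert x (upS (R i) x)) (init_ins rfl) (init_ins e.symm)
  rw [Finset.sum_insert (not_mem_upS _ _), Finset.sum_insert (not_mem_upS _ _)] at b
  linarith

lemma F_up {n m : ℕ} {F : Profile n m → Fin m → ℝ} (hF : IsSDS F) (hS : Strategyproof F)
    (R R' : Profile n m) (x : Fin m)
    (e : ∀ i, upS (R i) x = upS (R' i) x) : F R x = F R' x := by
  have key : ∀ T : Finset (Fin n), F R x = F (fun j => if j ∈ T then R' j else R j) x := by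
    intro T
    induction T using Finset.induction_on with
    | empty => simp
    | insert i T hi ih =>
      rw [ih]
      refine F_up_one hF hS (i := i) ?_ x ?_
      · intro j hj; simp [hj]
      · simp [hi, e]
  simpa using key univ

def GG {n m : ℕ} (F : Profile n m → Fin m → ℝ) (x : Fin m) (S : Fin n → Finset (Fin m)) : ℝ :=
  F (fun i => mkP (fun z => if z ∈ S i then 0 else if z = x then 1 else 2)) x

lemma GG_eq {n m : ℕ} {F : Profile n m → Fin m → ℝ} (hF : IsSDS F) (hS : Strategyproof F)
    (R : Profile n m) (x : Fin m) (S : Fin n → Finset (Fin m)) (h : ∀ i, upS (R i) x = S i) :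
    F R x = GG F x S := by
  refine F_up hF hS _ _ _ fun i => ?_
  rw [h]
  symm
  have hx : x ∉ S i := by rw [← h]; exact not_mem_upS _ _
  apply upS_mkP
  · intro y hy; simp [hy, hx]
  · intro y hy hyx; simp [hy, hx, hyx]

lemma exists_prof {n m : ℕ} (x : Fin m) (S : Fin n → Finset (Fin m)) (h : ∀ i, x ∉ S i) :
    ∃ R : Profile n m, ∀ i, upS (R i) x = S i := by
  refine ⟨fun i => mkP (fun z => if z ∈ S i then 0 else if z = x then 1 else 2), fun i => ?_⟩
  apply upS_mkP
  · intro y hy; simp [hy, h i]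
  · intro y hy hyx; simp [hy, h i, hyx]

lemma GG_inv {n m : ℕ} {F : Profile n m → Fin m → ℝ} (hF : IsSDS F) (hS : Strategyproof F)
    (hA : Anonymous F) (hN : Neutral F) (x : Fin m) (S S' : Fin n → Finset (Fin m))
    (h : ∀ i, x ∉ S i) (τ : Equiv.Perm (Fin m)) (π : Equiv.Perm (Fin n))
    (h' : ∀ j, S' j = (S (π j)).map τ.toEmbedding) : GG F (τ x) S' = GG F x S := by
  obtain ⟨R, hR⟩ := exists_prof x S h
  rw [← GG_eq hF hS R x S hR, ← hA π R, ← hN τ]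
  symm
  refine GG_eq hF hS _ _ _ fun j => ?_
  rw [h', ← hR]
  ext y
  simp only [upS, relabel, mem_map, mem_filter, mem_univ, true_and, Equiv.trans_apply,
    Equiv.symm_apply_apply, Equiv.coe_toEmbedding]
  exact ⟨fun h => ⟨τ.symm y, h, by simp⟩, by rintro ⟨a, h, rfl⟩; simpa using h⟩

def CC {n m : ℕ} (y : Fin m) (i : Fin n) (W : Finset (Fin m)) (S : Fin n → Finset (Fin m)) :
    Fin n → Finset (Fin m) :=
  fun j => if j = i then W else if y ∈ S j then ∅ else univ.erase y

lemma gain1 {n m : ℕ} {F : Profile n m → Fin m → ℝ} (hF : IsSDS F) (hS : Strategyproof F)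
    (x y : Fin m) (hxy : x ≠ y) (i : Fin n) (S : Fin n → Finset (Fin m)) (hx : ∀ j, x ∉ S j)
    (hy : y ∉ S i) :
    GG F x S - GG F x (Function.update S i (insert y (S i))) =
      GG F y (CC y i (S i) S) - GG F y (CC y i (insert x (S i)) S) ∧
    0 ≤ GG F x S - GG F x (Function.update S i (insert y (S i))) := by
  let P : Profile n m := fun j => if y ∈ S j then
    mkP (fun z => if z = y then 0 else if z ∈ S j then 1 else if z = x then 2 else 3)
    else mkP (fun z => if z ∈ S j then 0 else if z = x then 1 else if z = y then 3 else 2)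
  let p1 : Equiv.Perm (Fin m) :=
    mkP (fun z => if z ∈ S i then 0 else if z = x then 1 else if z = y then 2 else 3)
  let p2 : Equiv.Perm (Fin m) :=
    mkP (fun z => if z ∈ S i then 0 else if z = y then 1 else if z = x then 2 else 3)
  have hPx : ∀ j, upS (P j) x = S j := by
    intro j
    have := hx j
    by_cases h : y ∈ S j
    · simp only [P, if_pos h]
      apply upS_mkP <;> intro z <;> grind
    · simp only [P, if_neg h]
      apply upS_mkP <;> intro z <;> grind
  have hPy : ∀ j, upS (P j) y = if y ∈ S j then ∅ else univ.erase y := by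
    intro j
    have := hx j
    by_cases h : y ∈ S j
    · simp only [P, if_pos h]
      apply upS_mkP <;> intro z <;> grind
    · simp only [P, if_neg h]
      apply upS_mkP <;> intro z <;> grind
  have hxi := hx i
  have h1x : upS p1 x = S i := by apply upS_mkP <;> intro z <;> grind
  have h1y : upS p1 y = insert x (S i) := by apply upS_mkP <;> intro z <;> grind
  have h2x : upS p2 x = insert y (S i) := by apply upS_mkP <;> intro z <;> grind
  have h2y : upS p2 y = S i := by apply upS_mkP <;> intro z <;> grind
  let R := Function.update P i p1
  let R' := Function.update P i p2
  have eR : R i = p1 := by simp [R]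
  have eR' : R' i = p2 := by simp [R']
  have hRR : ∀ j, j ≠ i → R j = R' j := by intro j hj; simp [R, R', hj]
  have a1 : F R x = GG F x S := GG_eq hF hS _ _ _ fun j => by
    by_cases e : j = i
    · subst e; simp [R, h1x]
    · simp [R, e, hPx]
  have a2 : F R' x = GG F x (Function.update S i (insert y (S i))) := GG_eq hF hS _ _ _ fun j => by
    by_cases e : j = i
    · subst e; simp [R', h2x]
    · simp [R', e, hPx]
  have a3 : F R y = GG F y (CC y i (insert x (S i)) S) := GG_eq hF hS _ _ _ fun j => by
    by_cases e : j = i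
    · subst e; simp [R, h1y, CC]
    · simp [R, e, hPy, CC]
  have a4 : F R' y = GG F y (CC y i (S i) S) := GG_eq hF hS _ _ _ fun j => by
    by_cases e : j = i
    · subst e; simp [R', h2y, CC]
    · simp [R', e, hPy, CC]
  rw [← a1, ← a2, ← a3, ← a4]
  have b1 := sp_eq hF hS hRR (S i) (by rw [eR]; exact init_up h1x) (by rw [eR']; exact init_up h2y)
  have b2 := sp_eq hF hS hRR (insert y (insert x (S i))) (by rw [eR]; exact init_ins h1y)
    (by rw [eR', Finset.insert_comm]; exact init_ins h2x)
  have b3 := sp_set hF hS hRR (insert x (S i)) (by rw [eR]; exact init_ins h1x)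
  have hy' : y ∉ insert x (S i) := by simp [hy, hxy.symm]
  rw [Finset.sum_insert hy', Finset.sum_insert hy', Finset.sum_insert hxi,
    Finset.sum_insert hxi] at b2
  rw [Finset.sum_insert hxi, Finset.sum_insert hxi] at b3
  constructor <;> linarith

lemma exists_pi {n : ℕ} (i i' : Fin n) (V V' : Finset (Fin n)) (hi : i ∉ V) (hi' : i' ∉ V')
    (hc : V.card = V'.card) : ∃ π : Equiv.Perm (Fin n), π i' = i ∧ ∀ j, j ∈ V' ↔ π j ∈ V := by
  let e : {j // j ∈ V'} ≃ {j // j ∈ V} := Finset.equivOfCardEq hc.symm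
  let π0 := e.extendSubtype
  have h0 : ∀ j, j ∈ V' ↔ π0 j ∈ V := by
    intro j
    constructor
    · intro h; exact e.extendSubtype_mem j h
    · intro h; by_contra hc; exact e.extendSubtype_not_mem j hc h
  refine ⟨π0.trans (Equiv.swap (π0 i') i), by simp, fun j => ?_⟩
  rw [h0]
  have h1 : π0 i' ∉ V := fun h => hi' ((h0 _).mpr h)
  simp only [Equiv.trans_apply, Equiv.swap_apply_def]
  split_ifs with h2 h3
  · rw [h2]; simp [h1, hi]
  · rw [h3]; simp [h1, hi]
  · rfl

lemma exists_tau {m : ℕ} {x y x' y' : Fin m} {W W' : Finset (Fin m)} (hxy : x ≠ y) (hxy' : x' ≠ y')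
    (hx : x ∉ W) (hy : y ∉ W) (hx' : x' ∉ W') (hy' : y' ∉ W') (hc : W.card = W'.card) :
    ∃ τ : Equiv.Perm (Fin m), τ x = x' ∧ τ y = y' ∧ W.map τ.toEmbedding = W' := by
  have key : ∀ (x y : Fin m) (W : Finset (Fin m)), x ≠ y → x ∉ W → y ∉ W →
      ∃ p : Equiv.Perm (Fin m), upS p x = W ∧ upS p y = insert x W := by
    intro x y W h1 h2 h3
    refine ⟨mkP (fun z => if z ∈ W then 0 else if z = x then 1 else if z = y then 2 else 3), ?_, ?_⟩
      <;> apply upS_mkP <;> intro z <;> grind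
  obtain ⟨p, hp1, hp2⟩ := key x y W hxy hx hy
  obtain ⟨q, hq1, hq2⟩ := key x' y' W' hxy' hx' hy'
  have e1 : p x = q x' := by
    apply Fin.ext; rw [← upS_card, ← upS_card, hp1, hq1, hc]
  have e2 : p y = q y' := by
    apply Fin.ext
    rw [← upS_card, ← upS_card, hp2, hq2, Finset.card_insert_of_notMem hx,
      Finset.card_insert_of_notMem hx', hc]
  refine ⟨p.trans q.symm, by simp [e1], by simp [e2], ?_⟩
  rw [← hp1, ← hq1]
  ext z
  simp only [upS, mem_map, mem_filter, mem_univ, true_and, Equiv.coe_toEmbedding,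
    Equiv.trans_apply, e1]
  constructor
  · rintro ⟨a, h, rfl⟩; simpa using h
  · intro h; exact ⟨p.symm (q z), by simpa using h, by simp⟩

def cnt {n m : ℕ} (y : Fin m) (i : Fin n) (S : Fin n → Finset (Fin m)) : ℕ :=
  (univ.filter (fun j => j ≠ i ∧ y ∈ S j)).card

lemma gain2 {n m : ℕ} {F : Profile n m → Fin m → ℝ} (hF : IsSDS F) (hS : Strategyproof F)
    (hA : Anonymous F) (hN : Neutral F)
    (x y : Fin m) (hxy : x ≠ y) (i : Fin n) (S : Fin n → Finset (Fin m)) (hx : ∀ j, x ∉ S j)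
    (hy : y ∉ S i)
    (x' y' : Fin m) (hxy' : x' ≠ y') (i' : Fin n) (S' : Fin n → Finset (Fin m))
    (hx' : ∀ j, x' ∉ S' j) (hy' : y' ∉ S' i') (hc : (S i).card = (S' i').card)
    (hk : cnt y i S = cnt y' i' S') :
    GG F x S - GG F x (Function.update S i (insert y (S i))) =
    GG F x' S' - GG F x' (Function.update S' i' (insert y' (S' i'))) := by
  rw [(gain1 hF hS x y hxy i S hx hy).1, (gain1 hF hS x' y' hxy' i' S' hx' hy').1]
  obtain ⟨π, hπ, hπ'⟩ := exists_pi i i' _ _ (by simp) (by simp) hk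
  obtain ⟨τ, t1, t2, t3⟩ := exists_tau hxy hxy' (hx i) hy (hx' i') hy' hc
  have key : ∀ W W' : Finset (Fin m), y ∉ W → W.map τ.toEmbedding = W' →
      GG F y (CC y i W S) = GG F y' (CC y' i' W' S') := by
    intro W W' h1 h2
    rw [← t2]
    symm
    refine GG_inv hF hS hA hN y _ _ ?_ τ π ?_
    · intro j
      unfold CC
      split_ifs <;> simp [h1]
    · intro j
      by_cases e : j = i'
      · subst e; simp [CC, hπ, h2]
      · have e' : π j ≠ i := by
          intro h; rw [← hπ] at h; exact e (π.injective h)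
        have := hπ' j
        simp only [mem_filter, mem_univ, true_and, e, e', ne_eq, not_false_eq_true] at this
        simp only [CC, e, e', if_false, t2, this]
        split_ifs
        · simp
        · ext z
          simp only [mem_erase, mem_univ, and_true, mem_map, Equiv.coe_toEmbedding, ← t2]
          constructor
          · intro h; exact ⟨τ.symm z, by rintro h'; apply h; rw [← h']; simp, by simp⟩
          · rintro ⟨a, h, rfl⟩ h'; exact h (τ.injective h')
  rw [key _ _ hy t3, key (insert x (S i)) (insert x' (S' i')) (by simp [hy, hxy.symm]) (by
    rw [Finset.map_insert, t3]; simp [t1])]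

lemma exists_phi {n m : ℕ} {F : Profile n m → Fin m → ℝ} (hF : IsSDS F) (hS : Strategyproof F)
    (hA : Anonymous F) (hN : Neutral F) : ∃ φ : ℕ → ℕ → ℝ,
    ∀ (x y : Fin m) (i : Fin n) (S : Fin n → Finset (Fin m)), x ≠ y → (∀ j, x ∉ S j) → y ∉ S i →
    GG F x S - GG F x (Function.update S i (insert y (S i))) = φ (S i).card (cnt y i S) := by
  classical
  let Pr : ℕ → ℕ → ℝ → Prop := fun k a r => ∃ (x y : Fin m) (i : Fin n)
    (S : Fin n → Finset (Fin m)), x ≠ y ∧ (∀ j, x ∉ S j) ∧ y ∉ S i ∧ (S i).card = k ∧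
    cnt y i S = a ∧ r = GG F x S - GG F x (Function.update S i (insert y (S i)))
  refine ⟨fun k a => if h : ∃ r, Pr k a r then h.choose else 0, ?_⟩
  intro x y i S h1 h2 h3
  have h : ∃ r, Pr (S i).card (cnt y i S) r := ⟨_, x, y, i, S, h1, h2, h3, rfl, rfl, rfl⟩
  simp only [dif_pos h]
  obtain ⟨x', y', i', S', g1, g2, g3, g4, g5, g6⟩ := h.choose_spec
  rw [g6]
  exact gain2 hF hS hA hN x y h1 i S h2 h3 x' y' g1 i' S' g2 g3 g4.symm g5.symm

lemma card_fin_lt {N k : ℕ} (h : k ≤ N) : (univ.filter (fun j : Fin N => (j : ℕ) < k)).card = k := by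
  rw [Fin.card_filter_val_lt]; omega

lemma card_fin_le {N k : ℕ} (i : Fin N) (h : k + 1 ≤ N) (hi : (i : ℕ) = 0) :
    (univ.filter (fun j : Fin N => j ≠ i ∧ (j : ℕ) ≤ k)).card = k := by
  have : univ.filter (fun j : Fin N => j ≠ i ∧ (j : ℕ) ≤ k)
      = (univ.filter (fun j : Fin N => (j : ℕ) < k + 1)).erase i := by
    ext j; simp
  rw [this, Finset.card_erase_of_mem (by simp [hi]), card_fin_lt h, Nat.add_sub_cancel]

lemma phi_square {n m : ℕ} {F : Profile n m → Fin m → ℝ} (φ : ℕ → ℕ → ℝ)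
    (hφ : ∀ (x y : Fin m) (i : Fin n) (S : Fin n → Finset (Fin m)), x ≠ y → (∀ j, x ∉ S j) →
      y ∉ S i → GG F x S - GG F x (Function.update S i (insert y (S i))) = φ (S i).card (cnt y i S))
    (k a b : ℕ) (hk : k + 3 ≤ m) (ha : a + 1 ≤ n) (hb : b + 1 ≤ n) :
    φ k a + φ (k + 1) b = φ k b + φ (k + 1) a := by
  let x : Fin m := ⟨m - 1, by omega⟩
  let y : Fin m := ⟨m - 2, by omega⟩
  let z : Fin m := ⟨m - 3, by omega⟩
  let i : Fin n := ⟨0, by omega⟩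
  have hxy : x ≠ y := by simp [x, y]; omega
  have hxz : x ≠ z := by simp [x, z]; omega
  have hyz : y ≠ z := by simp [y, z]; omega
  let W : Finset (Fin m) := univ.filter (fun j : Fin m => (j : ℕ) < k)
  have hW : W.card = k := card_fin_lt (by omega)
  have hxW : x ∉ W := by simp [x, W]; omega
  have hyW : y ∉ W := by simp [y, W]; omega
  have hzW : z ∉ W := by simp [z, W]; omega
  let S : Fin n → Finset (Fin m) := fun j => if j = i then W else
    univ.filter (fun t => (t = y ∧ (j : ℕ) ≤ a) ∨ (t = z ∧ (j : ℕ) ≤ b))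
  have hSi : S i = W := by simp [S]
  have hxS : ∀ j, x ∉ S j := by
    intro j
    simp only [S]
    split_ifs
    · exact hxW
    · simp [hxy, hxz]
  have cy : ∀ T, cnt y i (Function.update S i T) = a := by
    intro T
    unfold cnt
    rw [← card_fin_le (k := a) i ha rfl]
    congr 1
    ext j
    simp only [mem_filter, mem_univ, true_and]
    refine and_congr_right fun e => ?_
    simp [e, S, hyz]
  have cz : ∀ T, cnt z i (Function.update S i T) = b := by
    intro T
    unfold cnt
    rw [← card_fin_le (k := b) i hb rfl]
    congr 1
    ext j
    simp only [mem_filter, mem_univ, true_and]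
    refine and_congr_right fun e => ?_
    simp [e, S, hyz.symm]
  have cy0 : cnt y i S = a := by simpa using cy (S i)
  have cz0 : cnt z i S = b := by simpa using cz (S i)
  have q1 := hφ x y i S hxy hxS (by rw [hSi]; exact hyW)
  have q2 := hφ x z i S hxz hxS (by rw [hSi]; exact hzW)
  have q3 := hφ x z i (Function.update S i (insert y (S i))) hxz (by
    intro j
    by_cases e : j = i
    · subst e; simp [hSi, hxy, hxW]
    · simp [e, hxS]) (by simp [hSi, hzW, hyz.symm])
  have q4 := hφ x y i (Function.update S i (insert z (S i))) hxy (by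
    intro j
    by_cases e : j = i
    · subst e; simp [hSi, hxz, hxW]
    · simp [e, hxS]) (by simp [hSi, hyW, hyz])
  simp only [Function.update_self, Function.update_idem, cy, cz, cy0, cz0, hSi,
    Finset.card_insert_of_notMem hyW, Finset.card_insert_of_notMem hzW, hW] at q1 q2 q3 q4
  rw [Finset.insert_comm] at q3
  linarith

lemma phi_nonneg {n m : ℕ} {F : Profile n m → Fin m → ℝ} (hF : IsSDS F) (hS : Strategyproof F)
    (φ : ℕ → ℕ → ℝ)
    (hφ : ∀ (x y : Fin m) (i : Fin n) (S : Fin n → Finset (Fin m)), x ≠ y → (∀ j, x ∉ S j) →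
      y ∉ S i → GG F x S - GG F x (Function.update S i (insert y (S i))) = φ (S i).card (cnt y i S))
    (k a : ℕ) (hk : k + 2 ≤ m) (ha : a + 1 ≤ n) : 0 ≤ φ k a := by
  let x : Fin m := ⟨m - 1, by omega⟩
  let y : Fin m := ⟨m - 2, by omega⟩
  let i : Fin n := ⟨0, by omega⟩
  have hxy : x ≠ y := by simp [x, y]; omega
  let W : Finset (Fin m) := univ.filter (fun j : Fin m => (j : ℕ) < k)
  have hW : W.card = k := card_fin_lt (by omega)
  have hxW : x ∉ W := by simp [x, W]; omega
  have hyW : y ∉ W := by simp [y, W]; omega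
  let S : Fin n → Finset (Fin m) := fun j => if j = i then W else
    univ.filter (fun t => (t = y ∧ (j : ℕ) ≤ a))
  have hSi : S i = W := by simp [S]
  have hxS : ∀ j, x ∉ S j := by
    intro j
    simp only [S]
    split_ifs
    · exact hxW
    · simp [hxy]
  have cy : cnt y i S = a := by
    unfold cnt
    rw [← card_fin_le (k := a) i ha rfl]
    congr 1
    ext j
    simp only [mem_filter, mem_univ, true_and]
    refine and_congr_right fun e => ?_
    simp [e, S]
  have q1 := hφ x y i S hxy hxS (by rw [hSi]; exact hyW)
  have q2 := (gain1 hF hS x y hxy i S hxS (by rw [hSi]; exact hyW)).2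
  rw [q1, cy, hSi, hW] at q2
  exact q2

lemma exists_uv {n m : ℕ} (hm : 3 ≤ m) (hn : 3 ≤ n) {F : Profile n m → Fin m → ℝ} (hF : IsSDS F)
    (hS : Strategyproof F) (hA : Anonymous F) (hN : Neutral F) : ∃ u v : ℕ → ℝ,
    (∀ k, 0 ≤ u k) ∧ (∀ a, 0 ≤ v a) ∧ (∀ k, m ≤ k + 1 → u k = 0) ∧
    ∀ (x y : Fin m) (i : Fin n) (S : Fin n → Finset (Fin m)), x ≠ y → (∀ j, x ∉ S j) → y ∉ S i →
    GG F x S - GG F x (Function.update S i (insert y (S i))) = u (S i).card + v (cnt y i S) := by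
  obtain ⟨φ, hφ⟩ := exists_phi hF hS hA hN
  have sq := phi_square φ hφ
  have nn := phi_nonneg hF hS φ hφ
  obtain ⟨k0, hk0, hmin⟩ := Finset.exists_min_image (Finset.range (m - 1)) (fun k => φ k 0)
    ⟨0, by simp; omega⟩
  have ind : ∀ k a, k + 2 ≤ m → a + 1 ≤ n → φ k a = φ k 0 + φ 0 a - φ 0 0 := by
    intro k a
    induction k with
    | zero => intro _ _; ring
    | succ k ih =>
      intro h1 h2
      have := sq k a 0 (by omega) h2 (by omega)
      have := ih (by omega) h2
      linarith
  simp only [Finset.mem_range] at hk0 hmin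
  refine ⟨fun k => if k + 2 ≤ m then φ k 0 - φ k0 0 else 0,
    fun a => if a + 1 ≤ n then φ k0 a else 0, ?_, ?_, ?_, ?_⟩
  · intro k
    dsimp only
    split_ifs with h
    · have := hmin k (by omega); linarith
    · exact le_rfl
  · intro a
    dsimp only
    split_ifs with h
    · exact nn k0 a (by omega) h
    · exact le_rfl
  · intro k hk
    dsimp only
    rw [if_neg (by omega)]
  · intro x y i S h1 h2 h3
    rw [hφ x y i S h1 h2 h3]
    have c1 : (S i).card + 2 ≤ m := by
      have : (insert x (insert y (S i))).card ≤ m := by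
        simpa using Finset.card_le_univ (insert x (insert y (S i)))
      rwa [Finset.card_insert_of_notMem (by simp [h1, h2 i]),
        Finset.card_insert_of_notMem h3] at this
    have c2 : cnt y i S + 1 ≤ n := by
      have : (insert i (univ.filter (fun j => j ≠ i ∧ y ∈ S j))).card ≤ n := by
        simpa using Finset.card_le_univ (insert i (univ.filter (fun j => j ≠ i ∧ y ∈ S j)))
      rwa [Finset.card_insert_of_notMem (by simp)] at this
    dsimp only
    rw [if_pos c1, if_pos c2, ind _ _ c1 c2, ind k0 _ (by omega) c2]
    ring

lemma GG_formula {n m : ℕ} {F : Profile n m → Fin m → ℝ} (u v : ℕ → ℝ)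
    (huv : ∀ (x y : Fin m) (i : Fin n) (S : Fin n → Finset (Fin m)), x ≠ y → (∀ j, x ∉ S j) →
      y ∉ S i → GG F x S - GG F x (Function.update S i (insert y (S i))) =
        u (S i).card + v (cnt y i S)) (x : Fin m) :
    ∀ (N : ℕ) (S : Fin n → Finset (Fin m)), (∑ i, (S i).card = N) → (∀ j, x ∉ S j) →
    GG F x S = GG F x (fun _ => ∅) - ∑ i, ∑ k ∈ range (S i).card, u k
      - ∑ y ∈ univ.filter (fun y => y ≠ x),
          ∑ a ∈ range (univ.filter (fun j => y ∈ S j)).card, v a := by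
  intro N
  induction N with
  | zero =>
    intro S h _
    have : S = fun _ => ∅ := by
      funext i
      simpa using (Finset.sum_eq_zero_iff.mp h) i (mem_univ _)
    subst this
    simp
  | succ N ih =>
    intro S h hx
    obtain ⟨i, hi⟩ : ∃ i, (S i).Nonempty := by
      by_contra hc
      push Not at hc
      simp [hc] at h
    obtain ⟨y, hy⟩ := hi
    have hxy : x ≠ y := by rintro rfl; exact hx i hy
    let T := Function.update S i ((S i).erase y)
    have hTi : T i = (S i).erase y := by simp [T]
    have hTj : ∀ j, j ≠ i → T j = S j := by intro j hj; simp [T, hj]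
    have hS : S = Function.update T i (insert y (T i)) := by
      simp [T, Finset.insert_erase hy]
    have hyT : y ∉ T i := by simp [T]
    have hcard : (S i).card = (T i).card + 1 := by
      rw [hTi, Finset.card_erase_add_one hy]
    have hxT : ∀ j, x ∉ T j := by
      intro j
      by_cases e : j = i
      · subst e; simp [hTi, hx]
      · rw [hTj j e]; exact hx j
    have hsum : ∀ f : ℕ → ℝ, ∑ j, f (S j).card = ∑ j, f (T j).card + (f (S i).card - f (T i).card) := by
      intro f
      rw [← Finset.add_sum_erase _ _ (mem_univ i), ← Finset.add_sum_erase univ (fun j => f (T j).card)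
        (mem_univ i), Finset.sum_congr rfl (g := fun j => f (T j).card)]
      · ring
      · intro j hj; rw [hTj j (Finset.mem_erase.mp hj).1]
    have hN : ∑ j, (T j).card = N := by
      have := hsum (fun k => (k : ℝ))
      rw [hcard] at this
      have h' : ((∑ j, (S j).card : ℕ) : ℝ) = ((N + 1 : ℕ) : ℝ) := by rw [h]
      push_cast at h' this
      have h'' : ((∑ j, (T j).card : ℕ) : ℝ) = (N : ℝ) := by push_cast; linarith
      exact_mod_cast h''
    have e1 := huv x y i T hxy hxT hyT
    rw [← hS, ih T hN hxT] at e1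
    rw [hsum (fun c => ∑ k ∈ range c, u k), hcard, Finset.sum_range_succ]
    have cT : (univ.filter (fun j => y ∈ T j)).card = cnt y i T := by
      unfold cnt; congr 1; ext j
      simp only [mem_filter, mem_univ, true_and]
      constructor
      · intro h; exact ⟨by rintro rfl; exact hyT h, h⟩
      · exact fun h => h.2
    have cS : (univ.filter (fun j => y ∈ S j)).card = cnt y i T + 1 := by
      have : univ.filter (fun j => y ∈ S j) = insert i (univ.filter (fun j => j ≠ i ∧ y ∈ T j)) := by
        ext j
        simp only [mem_filter, mem_univ, true_and, mem_insert]
        by_cases e : j = i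
        · subst e; simp [hy]
        · simp [e, hTj]
      rw [this, Finset.card_insert_of_notMem (by simp)]; rfl
    have hym : y ∈ univ.filter (fun y => y ≠ x) := by simp [hxy.symm]
    have e2 : ∑ y ∈ univ.filter (fun y => y ≠ x),
          ∑ a ∈ range (univ.filter (fun j => y ∈ S j)).card, v a =
        ∑ y ∈ univ.filter (fun y => y ≠ x),
          ∑ a ∈ range (univ.filter (fun j => y ∈ T j)).card, v a + v (cnt y i T) := by
      rw [← Finset.add_sum_erase _ _ hym, ← Finset.add_sum_erase _ (fun y =>
        ∑ a ∈ range (univ.filter (fun j => y ∈ T j)).card, v a) hym, cS, cT, Finset.sum_range_succ]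
      rw [Finset.sum_congr rfl (g := fun y =>
        ∑ a ∈ range (univ.filter (fun j => y ∈ T j)).card, v a)]
      · ring
      · intro z hz
        have hz := (Finset.mem_erase.mp hz).1
        congr 3
        ext j
        by_cases e : j = i
        · subst e; simp [hTi, hz]
        · simp [hTj j e]
    rw [e2]
    linarith

lemma F_formula {n m : ℕ} (hm : 3 ≤ m) (hn : 3 ≤ n) {F : Profile n m → Fin m → ℝ} (hF : IsSDS F)
    (hS : Strategyproof F) (hA : Anonymous F) (hN : Neutral F) :
    ∃ (D : ℝ) (u v : ℕ → ℝ), (∀ k, 0 ≤ u k) ∧ (∀ a, 0 ≤ v a) ∧ (∀ k, m ≤ k + 1 → u k = 0) ∧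
    ∀ R x, F R x = D - ∑ i, ∑ k ∈ range (R i x : ℕ), u k
      - ∑ y ∈ univ.filter (fun y => y ≠ x), ∑ a ∈ range (suppSize R y x), v a := by
  obtain ⟨u, v, hu, hv, hu', huv⟩ := exists_uv hm hn hF hS hA hN
  let x0 : Fin m := ⟨0, by omega⟩
  refine ⟨GG F x0 (fun _ => ∅), u, v, hu, hv, hu', fun R x => ?_⟩
  have h0 : GG F x (fun _ => ∅) = GG F x0 (fun _ => ∅) := by
    have := GG_inv hF hS hA hN x0 (fun _ => ∅) (fun _ => ∅) (by simp) (Equiv.swap x0 x) 1 (by simp)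
    simpa using this
  rw [GG_eq hF hS R x _ (fun _ => rfl), GG_formula u v huv x _ _ rfl (fun j => not_mem_upS _ _), h0]
  simp only [upS_card]
  congr 1
  refine Finset.sum_congr rfl fun y _ => ?_
  simp [suppSize, upS]

/-! ### Part 3: using Condorcet consistency -/

lemma avg_pair (A : ℕ → ℝ) (N : ℕ) :
    ∃ t, t ≤ N ∧ ((N : ℝ) + 1) * (A t + A (N - t)) ≤ 2 * ∑ r ∈ range (N + 1), A r := by
  by_contra hc
  push Not at hc
  have h1 : ∑ t ∈ range (N + 1), (2 * ∑ r ∈ range (N + 1), A r) <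
      ∑ t ∈ range (N + 1), ((N : ℝ) + 1) * (A t + A (N - t)) := by
    refine Finset.sum_lt_sum_of_nonempty ⟨0, by simp⟩ fun t ht => hc t ?_
    have := Finset.mem_range.mp ht
    omega
  rw [← Finset.mul_sum (range (N + 1)) (fun t => A t + A (N - t)), Finset.sum_add_distrib,
    Finset.sum_const, Finset.card_range, nsmul_eq_mul] at h1
  have h2 : ∑ t ∈ range (N + 1), A (N - t) = ∑ t ∈ range (N + 1), A t := by
    have := Finset.sum_range_reflect A (N + 1)
    simpa using this
  rw [h2] at h1
  push_cast at h1
  linarith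

def iv (m a b : ℕ) : Finset (Fin m) := univ.filter (fun y => a ≤ (y : ℕ) ∧ (y : ℕ) < b)

lemma iv_card {m a b : ℕ} (h : b ≤ m) : (iv m a b).card = b - a := by
  rw [← Nat.card_Ico, ← Finset.card_map Fin.valEmbedding]
  congr 1
  ext y
  simp only [iv, mem_map, mem_filter, mem_univ, true_and, Fin.valEmbedding_apply, Finset.mem_Ico]
  exact ⟨by rintro ⟨a, h, rfl⟩; exact h, fun h' => ⟨⟨y, by omega⟩, h', rfl⟩⟩

lemma avg_pair' (A : ℕ → ℝ) (hA0 : ∀ r, 0 ≤ A r) (m N : ℕ) (hN : N + 1 ≤ m) :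
    ∃ t, t ≤ N ∧ ((N : ℝ) + 1) * (A t + A (N - t)) ≤ 2 * ∑ r ∈ range m, A r := by
  obtain ⟨t, h1, h2⟩ := avg_pair A N
  refine ⟨t, h1, h2.trans ?_⟩
  have : ∑ r ∈ range (N + 1), A r ≤ ∑ r ∈ range m, A r :=
    Finset.sum_le_sum_of_subset_of_nonneg (Finset.range_mono hN) fun i _ _ => hA0 i
  linarith

def Fam (m : ℕ) (A : ℕ → ℝ) (n : ℕ) : Prop :=
  ∃ S : Fin n → Finset (Fin m), (∀ i, ∀ y ∈ S i, (y : ℕ) < m - 1) ∧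
    (∀ y : Fin m, (y : ℕ) < m - 1 → ∑ i, (if y ∈ S i then 1 else 0) = (n - 1) / 2) ∧
    (m : ℝ) * ∑ i, A (S i).card < 2 * n * ∑ r ∈ range m, A r

lemma fam_main {m : ℕ} (hm : 3 ≤ m) (A : ℕ → ℝ) (hA0 : ∀ r, 0 ≤ A r) (hA : Antitone A)
    (hpos : 0 < ∑ r ∈ range m, A r) : ∀ n, 3 ≤ n → Fam m A n := by
  set T := ∑ r ∈ range m, A r with hT
  obtain ⟨r, r1, r2⟩ := avg_pair' A hA0 m (m / 2) (by omega)
  obtain ⟨s, s1, s2⟩ := avg_pair' A hA0 m (m - 1 - m / 2) (by omega)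
  obtain ⟨t, t1, t2⟩ := avg_pair' A hA0 m (m - 1) (by omega)
  rw [← hT] at r2 s2 t2
  have hm0 : (0 : ℝ) < m := by exact_mod_cast (by omega : 0 < m)
  -- bounds
  have r3 : (m : ℝ) * (A r + A (m / 2 - r)) < 4 * T := by
    have h1 : (m : ℝ) + 1 ≤ 2 * ((m / 2 : ℕ) + 1) := by
      exact_mod_cast (by omega : m + 1 ≤ 2 * (m / 2 + 1))
    have h2 : 0 ≤ A r + A (m / 2 - r) := add_nonneg (hA0 _) (hA0 _)
    rcases h2.eq_or_lt with h2 | h2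
    · rw [← h2]; linarith
    · nlinarith
  have s3 : (m : ℝ) * (A s + A (m - 1 - m / 2 - s)) ≤ 4 * T := by
    have h1 : (m : ℝ) ≤ 2 * ((m - 1 - m / 2 : ℕ) + 1) := by
      exact_mod_cast (by omega : m ≤ 2 * (m - 1 - m / 2 + 1))
    have h2 : 0 ≤ A s + A (m - 1 - m / 2 - s) := add_nonneg (hA0 _) (hA0 _)
    nlinarith
  have s4 : (m : ℝ) * A (m - 1 - m / 2) ≤ 2 * T := by
    have h1 : A (m - 1 - m / 2) ≤ A s := hA s1
    have h2 : A (m - 1 - m / 2) ≤ A (m - 1 - m / 2 - s) := hA (Nat.sub_le _ _)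
    nlinarith
  have t3 : (m : ℝ) * (A t + A (m - 1 - t)) ≤ 2 * T := by
    have : ((m - 1 : ℕ) : ℝ) + 1 = m := by exact_mod_cast (by omega : m - 1 + 1 = m)
    rwa [this] at t2
  have b3 : Fam m A 3 := by
    refine ⟨![iv m 0 r, iv m r (m / 2), iv m (m / 2) (m - 1)], ?_, ?_, ?_⟩
    · intro i; fin_cases i <;> simp [iv] <;> omega
    · intro y hy
      simp only [Fin.sum_univ_three, iv, Matrix.cons_val, mem_filter, mem_univ, true_and]
      split_ifs <;> omega
    · simp only [Fin.sum_univ_three, Matrix.cons_val]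
      rw [iv_card (by omega), iv_card (by omega), iv_card (by omega), Nat.sub_zero]
      push_cast
      linarith
  have b4 : Fam m A 4 := by
    refine ⟨![iv m 0 r, iv m r (m / 2), iv m (m / 2) (m / 2 + s), iv m (m / 2 + s) (m - 1)],
      ?_, ?_, ?_⟩
    · intro i; fin_cases i <;> simp [iv] <;> omega
    · intro y hy
      simp only [Fin.sum_univ_four, iv, Matrix.cons_val, mem_filter, mem_univ, true_and]
      split_ifs <;> omega
    · simp only [Fin.sum_univ_four, Matrix.cons_val]
      rw [iv_card (by omega), iv_card (by omega), iv_card (by omega), iv_card (by omega),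
        Nat.sub_zero, Nat.add_sub_cancel_left, Nat.sub_add_eq]
      push_cast
      linarith
  have step : ∀ n, 3 ≤ n → Fam m A n → Fam m A (n + 2) := by
    rintro n hn ⟨S, S1, S2, S3⟩
    refine ⟨Fin.cons (iv m 0 t) (Fin.cons (iv m t (m - 1)) S : Fin (n + 1) → Finset (Fin m)),
      ?_, ?_, ?_⟩
    · intro i
      refine Fin.cases ?_ (fun i => Fin.cases ?_ (fun i => ?_) i) i
      · simp [iv]; omega
      · simp [iv]
      · simpa using S1 i
    · intro y hy
      simp only [Fin.sum_univ_succ, Fin.cons_zero, Fin.cons_succ]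
      rw [S2 y hy]
      simp only [iv, mem_filter, mem_univ, true_and]
      split_ifs <;> omega
    · simp only [Fin.sum_univ_succ, Fin.cons_zero, Fin.cons_succ]
      rw [iv_card (by omega), iv_card (by omega), Nat.sub_zero]
      push_cast
      linarith
  intro n
  induction n using Nat.strong_induction_on with
  | _ n ih =>
    intro hn
    rcases Nat.lt_or_ge n 5 with h | h
    · interval_cases n
      · exact b3
      · exact b4
    · obtain ⟨k, rfl⟩ : ∃ k, n = k + 2 := ⟨n - 2, by omega⟩
      exact step k (by omega) (ih k (by omega) (by omega))

lemma unique_part {n m : ℕ} (hm : 3 ≤ m) (hn : 3 ≤ n) {F : Profile n m → Fin m → ℝ} (hF : IsSDS F)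
    (hS : Strategyproof F) (hA : Anonymous F) (hN : Neutral F)
    (hC : CondorcetConsistent F (2 / (m : ℝ))) : F = randCopeland n m := by
  obtain ⟨D, u, v, hu, hv, hu', hform⟩ := F_formula hm hn hF hS hA hN
  set U : ℕ → ℝ := fun r => ∑ k ∈ range r, u k with hU
  set V : ℕ → ℝ := fun r => ∑ k ∈ range r, v k with hV
  have hform : ∀ R x, F R x = D - ∑ i, U (R i x : ℕ)
      - ∑ y ∈ univ.filter (fun y => y ≠ x), V (suppSize R y x) := hform
  have Umono : Monotone U := fun a b h =>
    Finset.sum_le_sum_of_subset_of_nonneg (Finset.range_mono h) fun i _ _ => hu i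
  have Vmono : Monotone V := fun a b h =>
    Finset.sum_le_sum_of_subset_of_nonneg (Finset.range_mono h) fun i _ _ => hv i
  have U0 : U 0 = 0 := by simp [hU]
  have V0 : V 0 = 0 := by simp [hV]
  have Vnn : ∀ r, 0 ≤ V r := fun r => by rw [← V0]; exact Vmono (Nat.zero_le _)
  have Ubig : ∀ r, U r ≤ U (m - 1) := by
    intro r
    rcases le_total r (m - 1) with h | h
    · exact Umono h
    · apply le_of_eq
      symm
      refine Finset.sum_subset (Finset.range_mono h) fun k _ hk => hu' k ?_
      simp at hk; omega
  have hm3 : (3 : ℝ) ≤ m := by exact_mod_cast hm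
  have hcard : ∀ x : Fin m, ((univ.filter (fun y : Fin m => y ≠ x)).card : ℝ) = (m : ℝ) - 1 := by
    intro x
    rw [Finset.filter_ne', Finset.card_erase_of_mem (mem_univ _), Finset.card_univ,
      Fintype.card_fin, Nat.cast_sub (by omega)]
    simp
  -- total sum
  have tot : ∀ s, s ≤ n → 1 = (m : ℝ) * D - n * ∑ r ∈ range m, U r
      - (m : ℝ) * ((m : ℝ) - 1) * (V s + V (n - s)) / 2 := by
    intro s hs
    let R : Profile n m := fun j => if (j : ℕ) < s then 1 else Fin.revPerm
    have c1 : (univ.filter (fun j : Fin n => (j : ℕ) < s)).card = s := card_fin_lt hs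
    have hlt : ∀ x y : Fin m, x < y → suppSize R x y = s := by
      intro x y h
      rw [← c1]
      unfold suppSize
      congr 1
      ext j
      simp only [mem_filter, mem_univ, true_and, R]
      split_ifs with hj
      · simp [h, hj]
      · simp [hj, h.le]
    have hpair : ∀ x y : Fin m, x ≠ y → V (suppSize R y x) + V (suppSize R x y) = V s + V (n - s) := by
      intro x y h
      have ha := suppSize_add R h
      rcases lt_or_gt_of_ne h with h | h
      · have := hlt x y h
        rw [this] at ha ⊢
        rw [show suppSize R y x = n - s by omega]; ring
      · have := hlt y x h
        rw [this] at ha ⊢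
        rw [show suppSize R x y = n - s by omega]
    have h2 := sym_sum (univ : Finset (Fin m)) (fun x y => V (suppSize R y x)) _ hpair
    have h1 := hF.2 R
    simp only [Finset.card_univ, Fintype.card_fin] at h2
    have h3 : ∑ x, ∑ i, U (R i x : ℕ) = n * ∑ r ∈ range m, U r := by
      rw [Finset.sum_comm]
      have : ∀ i, ∑ x, U (R i x : ℕ) = ∑ r ∈ range m, U r := by
        intro i
        rw [Equiv.sum_comp (R i) (fun r : Fin m => U (r : ℕ)), Finset.sum_range]
      simp [this]
    simp only [hform, Finset.sum_sub_distrib] at h1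
    rw [h3] at h1
    simp only [Finset.sum_const, Finset.card_univ, Fintype.card_fin, nsmul_eq_mul] at h1
    linarith
  have Vsym : ∀ s, s ≤ n → V s + V (n - s) = V n := by
    intro s hs
    have a := tot s hs
    have b := tot 0 (by omega)
    rw [V0, Nat.sub_zero, zero_add] at b
    have : (m : ℝ) * ((m : ℝ) - 1) * (V s + V (n - s) - V n) = 0 := by linarith
    have h0 : (m : ℝ) * ((m : ℝ) - 1) ≠ 0 := (mul_pos (by linarith) (by linarith)).ne'
    have := (mul_eq_zero.mp this).resolve_left h0
    linarith
  let x : Fin m := ⟨m - 1, by omega⟩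
  -- bottom
  have bot : 0 ≤ D - n * U (m - 1) - ((m : ℝ) - 1) * V n := by
    have h := hF.1 (fun _ => 1) x
    rw [hform] at h
    rw [Finset.sum_congr rfl (g := fun _ => V n) (s₁ := univ.filter (fun y => y ≠ x))] at h
    · rw [Finset.sum_const (s := univ.filter (fun y => y ≠ x)), nsmul_eq_mul, hcard] at h
      simpa [x] using h
    · intro y hy
      have hy : y < x := by
        have : y ≠ x := by simpa using hy
        have h1 : (y : ℕ) ≠ m - 1 := fun e => this (Fin.ext e)
        have := y.2
        show (y : ℕ) < m - 1
        omega
      congr 1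
      simp [suppSize, hy]
  -- Condorcet profiles
  have cond : ∀ S : Fin n → Finset (Fin m), (∀ i, ∀ y ∈ S i, (y : ℕ) < m - 1) →
      (∀ y : Fin m, (y : ℕ) < m - 1 → ∑ i, (if y ∈ S i then 1 else 0) = (n - 1) / 2) →
      2 / (m : ℝ) ≤ D - ∑ i, U (S i).card - ((m : ℝ) - 1) * V ((n - 1) / 2) := by
    intro S S1 S2
    obtain ⟨R, hR⟩ := exists_prof x S (fun i hi => by
      have := S1 i x hi
      simp [x] at this)
    have hs : ∀ y, y ≠ x → suppSize R y x = (n - 1) / 2 := by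
      intro y hy
      rw [← S2 y]
      · rw [Finset.sum_boole]
        simp only [Nat.cast_id]
        unfold suppSize
        congr 1
        ext j
        simp [← hR, upS]
      · have h1 : (y : ℕ) ≠ m - 1 := fun e => hy (Fin.ext e)
        have := y.2
        omega
    have h := hC R x (fun y hy => by
      have a := suppSize_add R hy
      have := hs y hy
      omega)
    rw [hform, Finset.sum_congr rfl (g := fun _ => V ((n - 1) / 2))
      (s₁ := univ.filter (fun y => y ≠ x))] at h
    · rw [Finset.sum_const, nsmul_eq_mul, hcard] at h
      simpa only [← hR, upS_card] using h
    · intro y hy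
      rw [hs y (by simpa using hy)]
  -- the point voting part vanishes
  let A : ℕ → ℝ := fun r => U (m - 1) - U r
  have A0 : ∀ r, 0 ≤ A r := fun r => sub_nonneg.mpr (Ubig r)
  have Aanti : Antitone A := fun a b h => sub_le_sub_left (Umono h) _
  have hsumA : ∑ r ∈ range m, A r = m * U (m - 1) - ∑ r ∈ range m, U r := by
    simp [A, Finset.sum_sub_distrib]
  have htot := tot 0 (by omega)
  rw [V0, Nat.sub_zero, zero_add] at htot
  have hV' := Vnn ((n - 1) / 2)
  -- the basic inequality
  have basic : ∀ S : Fin n → Finset (Fin m), (∀ i, ∀ y ∈ S i, (y : ℕ) < m - 1) →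
      (∀ y : Fin m, (y : ℕ) < m - 1 → ∑ i, (if y ∈ S i then 1 else 0) = (n - 1) / 2) →
      m * (D - n * U (m - 1) - ((m : ℝ) - 1) * V n) + 2 * n * ∑ r ∈ range m, A r
        + m * ((m : ℝ) - 1) * V ((n - 1) / 2) ≤ m * ∑ i, A (S i).card := by
    intro S S1 S2
    have h := cond S S1 S2
    have h' : ∑ i, A (S i).card = n * U (m - 1) - ∑ i, U (S i).card := by
      simp [A, Finset.sum_sub_distrib]
    rw [div_le_iff₀ (by linarith)] at h
    rw [h', hsumA]
    linarith
  have hn1 : 0 ≤ (m : ℝ) * (D - n * U (m - 1) - ((m : ℝ) - 1) * V n) := mul_nonneg (by linarith) bot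
  have hn2 : 0 ≤ (m : ℝ) * ((m : ℝ) - 1) * V ((n - 1) / 2) :=
    mul_nonneg (mul_nonneg (by linarith) (by linarith)) hV'
  have hA0 : ∑ r ∈ range m, A r = 0 := by
    by_contra hne
    have hp : 0 < ∑ r ∈ range m, A r :=
      lt_of_le_of_ne (Finset.sum_nonneg fun i _ => A0 i) (Ne.symm hne)
    obtain ⟨S, S1, S2, S3⟩ := fam_main hm A A0 Aanti hp n hn
    have := basic S S1 S2
    linarith
  have hAz : ∀ r, A r = 0 := by
    intro r
    have h0 : A 0 = 0 :=
      (Finset.sum_eq_zero_iff_of_nonneg (fun i _ => A0 i)).mp hA0 0 (by simp; omega)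
    exact le_antisymm (h0 ▸ Aanti (Nat.zero_le r)) (A0 r)
  have hUz : ∀ r, U r = 0 := by
    intro r
    have h0 : U (m - 1) - U 0 = 0 := hAz 0
    have h1 : U (m - 1) - U r = 0 := hAz r
    linarith
  -- existence of a barely-Condorcet family
  obtain ⟨S, S1, S2, -⟩ := fam_main hm (fun r => if r = 0 then 1 else 0)
    (fun r => by split_ifs <;> norm_num)
    (fun a b h => by dsimp only; split_ifs <;> first | omega | norm_num)
    (by rw [Finset.sum_ite_eq' (range m) 0]; rw [if_pos (by simp; omega)]; norm_num) n hn
  have hb := basic S S1 S2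
  rw [hA0] at hb
  simp only [hAz, Finset.sum_const_zero, mul_zero, add_zero] at hb
  have hmm : (m : ℝ) * ((m : ℝ) - 1) ≠ 0 := (mul_pos (by linarith) (by linarith)).ne'
  have hVz : V ((n - 1) / 2) = 0 := by
    have : (m : ℝ) * ((m : ℝ) - 1) * V ((n - 1) / 2) = 0 := by linarith
    exact (mul_eq_zero.mp this).resolve_left hmm
  have hD : D = ((m : ℝ) - 1) * V n := by
    have : (m : ℝ) * (D - n * U (m - 1) - ((m : ℝ) - 1) * V n) = 0 := by linarith
    have := (mul_eq_zero.mp this).resolve_left (by linarith)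
    rw [hUz] at this
    linarith
  have hVn : V n = 2 / ((m : ℝ) * ((m : ℝ) - 1)) := by
    rw [eq_div_iff hmm]
    simp only [hUz, Finset.sum_const_zero, mul_zero] at htot
    rw [hD] at htot
    linarith
  have hVlow : ∀ s, 2 * s < n → V s = 0 := by
    intro s hs
    exact le_antisymm (hVz ▸ Vmono (by omega)) (Vnn s)
  have hVcw : ∀ s, s ≤ n → V s = copelandWeight n m s := by
    intro s hs
    have hsym := Vsym s hs
    unfold copelandWeight
    split_ifs with h1 h2
    · rw [hVlow (n - s) (by omega)] at hsym
      linarith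
    · rw [show n - s = s by omega, hVn] at hsym
      have : (2 : ℝ) / ((m : ℝ) * ((m : ℝ) - 1)) = 2 * (1 / ((m : ℝ) * ((m : ℝ) - 1))) := by ring
      linarith
    · exact hVlow s (by omega)
  funext R z
  rw [hform]
  simp only [hUz, Finset.sum_const_zero, sub_zero]
  rw [hD, ← hcard z, ← nsmul_eq_mul, ← Finset.sum_const, ← Finset.sum_sub_distrib]
  unfold randCopeland
  refine Finset.sum_congr rfl fun y hy => ?_
  have hyz : y ≠ z := by simpa using hy
  have ha := suppSize_add R hyz
  rw [← hVcw _ (by omega), ← Vsym (suppSize R y z) (by omega),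
    show suppSize R z y = n - suppSize R y z by omega]
  ring
/-- For `m ≥ 3` and `n ≥ 3`, the randomized Copeland rule is the
unique SDS that is strategyproof, anonymous, neutral, and
`2/m`-Condorcet-consistent. -/
theorem randCopeland_unique (n m : ℕ) (hm : 3 ≤ m) (hn : 3 ≤ n) :
    (IsSDS (randCopeland n m) ∧ Strategyproof (randCopeland n m) ∧
      Anonymous (randCopeland n m) ∧ Neutral (randCopeland n m) ∧
      CondorcetConsistent (randCopeland n m) (2 / (m : ℝ))) ∧
    (∀ F : Profile n m → Fin m → ℝ,
      IsSDS F → Strategyproof F → Anonymous F → Neutral F →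
      CondorcetConsistent F (2 / (m : ℝ)) → F = randCopeland n m) := by

  exact ⟨⟨rc_sds hm, rc_sp hm, rc_anon, rc_neut, rc_cc hm⟩,
    fun F h1 h2 h3 h4 h5 => unique_part hm hn h1 h2 h3 h4 h5⟩
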